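/- For every integer n ≥ 5, the oriented path Q_n admits a homomorphism to Q_{n-2}. -/

import Mathlib

/-- A homomorphism of digraphs (binary relations) is an arc-preserving vertex map. -/
def Hom {α : Type*} {β : Type*} (A : α → α → Prop) (B : β → β → Prop) (f : α → β) : Prop :=
  ∀ u v, A u v → B (f u) (f v)

/-- `A` admits a homomorphism to `B`. -/
def HomTo {α : Type*} {β : Type*} (A : α → α → Prop) (B : β → β → Prop) : Prop :=
  ∃ f : α → β, Hom A B f

/-- Homomorphic equivalence of digraphs. -/
def HomEquiv {α : Type*} {β : Type*} (A : α → α → Prop) (B : β → β → Prop) : Prop :=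
  HomTo A B ∧ HomTo B A

/-- An oriented graph: no symmetric arcs (in particular, no loops). -/
def IsOriented {α : Type*} (G : α → α → Prop) : Prop := ∀ u v, G u v → ¬ G v u

/-- A digraph is (weakly) connected: any two vertices are joined by a semi-walk. -/
def Conn {α : Type*} (G : α → α → Prop) : Prop :=
  ∀ u v : α, Relation.ReflTransGen (fun a b => G a b ∨ G b a) u v

/-- Direction of the `i`-th arc (between `q i` and `q (i+1)`) of the oriented path `Q n`:
the first two arcs are forward, the middle section `(q 1, …, q (n-2))` alternates
(so its arcs `1 ≤ i ≤ n-3` are forward iff `i` is odd), and the last two arcs agree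
in direction. -/
def QForward (n i : ℕ) : Prop :=
  i = 0 ∨ i = 1 ∨ (i + 3 ≤ n ∧ Odd i) ∨ (i = n - 2 ∧ Even n)

/-- The oriented path `Q n` on vertex set `Fin n`. -/
def QArc (n : ℕ) (u v : Fin n) : Prop :=
  ((v : ℕ) = (u : ℕ) + 1 ∧ QForward n (u : ℕ)) ∨
  ((u : ℕ) = (v : ℕ) + 1 ∧ ¬ QForward n (v : ℕ))

/-- The oriented cycle `AC n` on vertex set `Fin n`, obtained by identifying the endpoints
of the alternating path on `n+1` vertices beginning with a forward arc: the arc between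
`a i` and `a ((i+1) % n)` is forward iff `i` is even. -/
def ACArc (n : ℕ) (u v : Fin n) : Prop :=
  ((v : ℕ) = ((u : ℕ) + 1) % n ∧ Even (u : ℕ)) ∨
  ((u : ℕ) = ((v : ℕ) + 1) % n ∧ ¬ Even (v : ℕ))

/-- The directed path on `k` vertices. -/
def DiPath (k : ℕ) (u v : Fin k) : Prop := (v : ℕ) = (u : ℕ) + 1

/-- The transitive tournament on `k` vertices. -/
def TT (k : ℕ) (u v : Fin k) : Prop := u < v

/-- `(A, B)` is a duality pair: for every digraph `G`, `A → G` iff `G ↛ B`. -/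
def DualityPair {α : Type*} {β : Type*} (A : α → α → Prop) (B : β → β → Prop) : Prop :=
  ∀ (W : Type) (G : W → W → Prop), HomTo A G ↔ ¬ HomTo G B

/-- `o` is an orientation of the undirected graph `G`: every arc of `o` lies on an edge
of `G`, and every edge of `G` gets exactly one of the two directions. -/
def IsOrientationOf {V : Type*} (o : V → V → Prop) (G : SimpleGraph V) : Prop :=
  (∀ u v, o u v → G.Adj u v) ∧ ∀ u v, G.Adj u v → Xor' (o u v) (o v u)

/-- The undirected cycle on `k` vertices. -/
def UCycle (k : ℕ) : SimpleGraph (Fin k) :=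
  SimpleGraph.fromRel (fun u v => (v : ℕ) = ((u : ℕ) + 1) % k)

/-- For every integer `n ≥ 5`, the oriented path `Q n` admits a homomorphism to `Q (n-2)`. -/
theorem stmt0 (n : ℕ) (hn : 5 ≤ n) : HomTo (QArc n) (QArc (n - 2)) := by
  by_cases h5 : n = 5
  · subst h5
    refine ⟨fun u => ⟨if (u : ℕ) ≤ 2 then u else 4 - u, by split_ifs <;> omega⟩, ?_⟩
    rintro ⟨u, hu⟩ ⟨v, hv⟩ h
    simp only [QArc, QForward, Nat.odd_iff, Nat.even_iff] at h ⊢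
    split_ifs <;> omega
  · refine ⟨fun u => ⟨if (u : ℕ) ≤ 2 then u else u - 2, by split_ifs <;> omega⟩, ?_⟩
    rintro ⟨u, hu⟩ ⟨v, hv⟩ h
    simp only [QArc, QForward, Nat.odd_iff, Nat.even_iff] at h ⊢
    split_ifs <;> omega
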